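/- Let r ≥ 1 be an integer and set m = 12r + 2. Let ℓ be a prime with ℓ ≡ 1 (mod 12) if r is odd and ℓ ≡ 7 (mod 12) if r is even, and suppose n is a natural number satisfying 24rn + 3(6r−1)² = 3ℓ². Then there exist no integers x, y, z with P_m(x,y,z) = n. -/

import Mathlib

/-- The `x`-th generalized `m`-gonal number, `p_m(x) = ((m-2)x² - (m-4)x)/2`
(the division is exact). -/
def pm (m x : ℤ) : ℤ := ((m - 2) * x ^ 2 - (m - 4) * x) / 2

theorem exists_prime_two_mod_three (A : ℕ) (h : A % 3 = 2) :
    ∃ p : ℕ, p.Prime ∧ p ∣ A ∧ p % 3 = 2 := by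
  induction A using Nat.strong_induction_on with
  | _ A ih =>
    have h1 : A ≠ 1 := by omega
    have hp := Nat.minFac_prime h1
    obtain ⟨k, hk⟩ := Nat.minFac_dvd A
    set p := A.minFac with hpdef
    have hmod : (p % 3) * (k % 3) % 3 = 2 := by rw [← Nat.mul_mod, ← hk]; exact h
    have hp3 : p % 3 = 0 ∨ p % 3 = 1 ∨ p % 3 = 2 := by omega
    rcases hp3 with h0 | h0 | h0
    · rw [h0] at hmod; simp at hmod
    · have hk2 : k % 3 = 2 := by rw [h0] at hmod; omega
      have hlt : k < A := by
        have := hp.two_le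
        have hk0 : 0 < k := by omega
        nlinarith
      obtain ⟨q, hq, hqk, hq3⟩ := ih k hlt hk2
      exact ⟨q, hq, hk ▸ Dvd.dvd.mul_left hqk p, hq3⟩
    · exact ⟨p, hp, Nat.minFac_dvd A, h0⟩

theorem prime_dvd_of_dvd_norm (p : ℕ) (hp : p.Prime) (h3 : p % 3 = 2) (u v : ℤ)
    (h : (p : ℤ) ∣ u ^ 2 + u * v + v ^ 2) : (p : ℤ) ∣ u ∧ (p : ℤ) ∣ v := by
  have : Fact p.Prime := ⟨hp⟩
  rw [← ZMod.intCast_zmod_eq_zero_iff_dvd u p, ← ZMod.intCast_zmod_eq_zero_iff_dvd v p]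
  rw [← ZMod.intCast_zmod_eq_zero_iff_dvd _ p] at h
  push_cast at h
  generalize (u : ZMod p) = a at *
  generalize (v : ZMod p) = b at *
  by_cases ha : a = 0
  · subst ha
    simpa using h
  by_cases hb : b = 0
  · subst hb
    simp at h
    exact absurd h ha
  exfalso
  have hcube : a ^ 3 = b ^ 3 := by linear_combination (a - b) * h
  have fa := ZMod.pow_card_sub_one_eq_one ha
  have fb := ZMod.pow_card_sub_one_eq_one hb
  obtain ⟨k, hk⟩ : ∃ k, p - 1 = 3 * k + 1 := ⟨p / 3, by omega⟩
  rw [hk, pow_succ, pow_mul] at fa fb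
  rw [hcube] at fa
  have hne : (b ^ 3) ^ k ≠ 0 := pow_ne_zero _ (pow_ne_zero _ hb)
  have hab : a = b := mul_left_cancel₀ hne (fa.trans fb.symm)
  subst hab
  have h3a : (3 : ZMod p) * a ^ 2 = 0 := by linear_combination h
  have h30 : ((3 : ℕ) : ZMod p) = 0 := by
    rcases mul_eq_zero.mp h3a with h | h
    · exact_mod_cast h
    · exact absurd h (pow_ne_zero _ ha)
  rw [ZMod.natCast_eq_zero_iff] at h30
  have := (Nat.prime_dvd_prime_iff_eq hp Nat.prime_three).mp h30
  omega

theorem coprime_factor_mod_three (B : ℕ) (A : ℕ) : A.Coprime B → ∀ u v : ℤ,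
    (A : ℤ) * B = u ^ 2 + u * v + v ^ 2 → A % 3 ≠ 2 := by
  induction A using Nat.strong_induction_on with
  | _ A ih =>
    intro hc u v huv h2
    obtain ⟨p, hp, hpA, hp3⟩ := exists_prime_two_mod_three A h2
    have hpd : (p : ℤ) ∣ u ^ 2 + u * v + v ^ 2 := by
      rw [← huv]
      exact Dvd.dvd.mul_right (by exact_mod_cast hpA) _
    obtain ⟨⟨u', hu⟩, ⟨v', hv⟩⟩ := prime_dvd_of_dvd_norm p hp hp3 u v hpd
    have hdvd : ((p ^ 2 : ℕ) : ℤ) ∣ ((A * B : ℕ) : ℤ) := by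
      push_cast
      rw [huv, hu, hv]
      exact ⟨u' ^ 2 + u' * v' + v' ^ 2, by ring⟩
    have hdvd' : p ^ 2 ∣ A * B := by exact_mod_cast hdvd
    have hcp : (p ^ 2).Coprime B := (Nat.Coprime.coprime_dvd_left hpA hc).pow_left 2
    obtain ⟨k, hk⟩ := hcp.dvd_of_dvd_mul_right hdvd'
    have hpp := hp.two_le
    have hp2 : p ^ 2 % 3 = 1 := by rw [Nat.pow_mod, hp3]
    have hk3 : k % 3 = 2 := by
      rw [hk, Nat.mul_mod, hp2] at h2
      omega
    have hlt : k < A := by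
      have : 0 < k := by omega
      have h4 : 4 ≤ p ^ 2 := by nlinarith
      nlinarith
    refine ih k hlt (Nat.Coprime.coprime_dvd_left ⟨p ^ 2, by rw [hk]; ring⟩ hc) u' v' ?_ hk3
    have hp0 : ((p : ℤ) ^ 2) ≠ 0 := by positivity
    apply mul_left_cancel₀ hp0
    rw [hk, hu, hv] at huv
    push_cast at huv
    linear_combination huv

theorem no_rep_aux (L : ℕ) (hL : L.Prime) (hL3 : (L : ℤ) % 3 = 1) (X Y Z u v : ℤ)
    (hu : X - Y = 12 * u) (hv : Y - Z = 12 * v) (hX3 : X % 3 = 1)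
    (hX4 : (X + L) % 4 = 0) (hLo : (L : ℤ) % 2 = 1)
    (h : X ^ 2 + Y ^ 2 + Z ^ 2 = 3 * (L : ℤ) ^ 2) : False := by
  obtain ⟨s, hs⟩ : ∃ s, s = X - (8 * u + 4 * v) := ⟨_, rfl⟩
  have hXs : X = s + 8 * u + 4 * v := by linarith
  have hYs : Y = s - 4 * u + 4 * v := by linarith
  have hZs : Z = s - 4 * u - 8 * v := by linarith
  have key : (L - s) * (L + s) = 32 * (u ^ 2 + u * v + v ^ 2) := by
    rw [hXs, hYs, hZs] at h
    nlinarith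
  have hN : 0 ≤ u ^ 2 + u * v + v ^ 2 := by nlinarith [sq_nonneg (u + v), sq_nonneg u, sq_nonneg v]
  obtain ⟨a, ha⟩ : ∃ a, (L : ℤ) - s = 2 * a := ⟨(L - s) / 2, by omega⟩
  have hao : a % 2 = 1 := by omega
  have hLs : (16 : ℤ) ∣ L + s := by
    have h1 : (16 : ℤ) ∣ a * (L + s) := ⟨u ^ 2 + u * v + v ^ 2, by
      rw [ha] at key; linarith⟩
    have hcop : IsCoprime (16 : ℤ) a := by
      have : IsCoprime (2 : ℤ) a := ⟨-(a / 2), 1, by omega⟩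
      have := this.pow_left (m := 4)
      norm_num at this
      exact this
    exact hcop.dvd_of_dvd_mul_left h1
  obtain ⟨b, hb⟩ := hLs
  have hab : a * b = u ^ 2 + u * v + v ^ 2 := by
    rw [ha, hb] at key; linarith
  have hsum : a + 8 * b = L := by omega
  have hLpos : (0 : ℤ) < L := by exact_mod_cast hL.pos
  have huv3 : (u ^ 2 + u * v + v ^ 2) % 3 = 0 → (u - v) % 3 = 0 := by
    intro h0
    have : (3 : ℤ) ∣ (u - v) ^ 2 := by
      have := Int.dvd_of_emod_eq_zero h0
      obtain ⟨c, hc⟩ := this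
      exact ⟨c - u * v, by linarith⟩
    exact Int.emod_eq_zero_of_dvd (Int.prime_three.dvd_of_dvd_pow this)
  by_cases hab0 : a * b = 0
  · have := huv3 (by omega)
    rcases mul_eq_zero.mp hab0 with h0 | h0 <;> subst h0 <;> omega
  have hpos : 0 < a * b := lt_of_le_of_ne (hab ▸ hN) (Ne.symm hab0)
  have ha0 : 0 < a := by
    by_contra hneg
    have : b < 0 := by
      by_contra hb'
      nlinarith
    omega
  have hb0 : 0 < b := by
    by_contra hneg
    nlinarith
  lift a to ℕ using ha0.le
  lift b to ℕ using hb0.le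
  have hsumN : a + 8 * b = L := by exact_mod_cast hsum
  have hbL : b < L := by omega
  have hLb : L.Coprime b := (Nat.Prime.coprime_iff_not_dvd hL).mpr fun hd =>
    absurd (Nat.le_of_dvd (by omega) hd) (by omega)
  have hcab : a.Coprime b := by
    rw [← hsumN] at hLb
    simpa using hLb
  have h1 := coprime_factor_mod_three b a hcab u v hab
  have h2 := coprime_factor_mod_three a b hcab.symm u v (by rw [mul_comm]; exact hab)
  have hb3 : b % 3 = 0 := by omega
  have := huv3 (by
    rw [← hab]
    exact Int.emod_eq_zero_of_dvd (Dvd.dvd.mul_left (by omega) _))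
  omega

theorem not_represented_of_three_ell_sq
    (r : ℤ) (hr : 1 ≤ r) (m : ℤ) (hm : m = 12 * r + 2)
    (ℓ : ℕ) (hℓ : ℓ.Prime)
    (hℓmod : (Odd r → (ℓ : ℤ) % 12 = 1) ∧ (Even r → (ℓ : ℤ) % 12 = 7))
    (n : ℕ) (hn : 24 * r * (n : ℤ) + 3 * (6 * r - 1) ^ 2 = 3 * (ℓ : ℤ) ^ 2) :
    ¬ ∃ x y z : ℤ, pm m x + pm m y + pm m z = (n : ℤ) := by
  rintro ⟨x, y, z, h⟩
  have hpm : ∀ t : ℤ, pm m t = 6 * r * t ^ 2 - (6 * r - 1) * t := by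
    intro t
    unfold pm
    rw [hm]
    apply Int.ediv_eq_of_eq_mul_right (by norm_num)
    ring
  rw [hpm, hpm, hpm] at h
  have hLmod : (ℓ : ℤ) % 3 = 1 ∧ (ℓ : ℤ) % 2 = 1 ∧ (6 * r + 1 + ℓ) % 4 = 0 := by
    rcases Int.even_or_odd r with he | ho
    · have := hℓmod.2 he
      obtain ⟨k, hk⟩ := he
      omega
    · have := hℓmod.1 ho
      obtain ⟨k, hk⟩ := ho
      omega
  obtain ⟨c, hc⟩ : ∃ c, c = r * x := ⟨_, rfl⟩
  refine no_rep_aux ℓ hℓ hLmod.1 (12 * (r * x) - (6 * r - 1)) (12 * (r * y) - (6 * r - 1))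
    (12 * (r * z) - (6 * r - 1)) (r * x - r * y) (r * y - r * z) (by ring) (by ring) ?_ ?_
    hLmod.2.1 ?_
  · rw [← hc]; omega
  · rw [← hc]; omega
  · linear_combination hn + 24 * r * h
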